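/- If d is a bounded metric on X inducing its topology, then the Kantorovich metric d̂ on the space of Radon probability measures on X induces the weak (narrow) topology on that space. -/

import Mathlib

open MeasureTheory
open scoped ENNReal

/-- A measure is tight (Radon) if the complement of some compact set has arbitrarily
small measure. -/
def IsTightM {α : Type*} [TopologicalSpace α] {m : MeasurableSpace α} (μ : Measure α) : Prop :=
  ∀ ε : ℝ≥0∞, 0 < ε → ∃ K : Set α, IsCompact K ∧ μ Kᶜ ≤ ε

/-- `l` is a coupling of `μ` and `η` if its marginals are `μ` and `η`. -/
def IsCoupling {α : Type*} {m : MeasurableSpace α} (l : Measure (α × α)) (μ η : Measure α) :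
    Prop :=
  l.map Prod.fst = μ ∧ l.map Prod.snd = η

/-- The Kantorovich distance between two (tight) probability measures: the infimum of
`∫ dist dλ` over all tight couplings `λ` of `μ` and `η`. -/
noncomputable def kant {α : Type*} [PseudoMetricSpace α] [MeasurableSpace α]
    (μ η : Measure α) : ℝ :=
  sInf {r | ∃ l : Measure (α × α), IsProbabilityMeasure l ∧ IsTightM l ∧
    IsCoupling l μ η ∧ r = ∫ p, dist p.1 p.2 ∂l}





section helpers
set_option linter.unusedSectionVars false
open Set Filter Topology
variable {X : Type*} [MetricSpace X] [MeasurableSpace X] [BorelSpace X]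

lemma coupling_prob {l : Measure (X × X)} {μ η : Measure X} [IsProbabilityMeasure μ]
    (h : IsCoupling l μ η) : IsProbabilityMeasure l := by
  constructor
  have := congrArg (fun m => m univ) h.1
  simpa [Measure.map_apply measurable_fst MeasurableSet.univ] using this

lemma coupling_tight {l : Measure (X × X)} {μ η : Measure X}
    (h : IsCoupling l μ η) (hμ : IsTightM μ) (hη : IsTightM η) : IsTightM l := by
  intro ε hε
  have hε2 : 0 < ε / 2 := ENNReal.half_pos hε.ne'
  obtain ⟨K, hK, hK'⟩ := hμ _ hε2
  obtain ⟨L, hL, hL'⟩ := hη _ hε2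
  refine ⟨K ×ˢ L, hK.prod hL, ?_⟩
  rw [← h.1, Measure.map_apply measurable_fst hK.measurableSet.compl] at hK'
  rw [← h.2, Measure.map_apply measurable_snd hL.measurableSet.compl] at hL'
  calc l (K ×ˢ L)ᶜ ≤ l (Prod.fst ⁻¹' Kᶜ ∪ Prod.snd ⁻¹' Lᶜ) := by
        apply measure_mono
        rintro ⟨x, y⟩ hxy
        simp only [mem_compl_iff, mem_prod, mem_union, mem_preimage] at *
        tauto
    _ ≤ _ := measure_union_le _ _
    _ ≤ ε / 2 + ε / 2 := add_le_add hK' hL'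
    _ = ε := ENNReal.add_halves ε

lemma aemeas_dist {l : Measure (X × X)} [IsProbabilityMeasure l] (hl : IsTightM l) :
    AEStronglyMeasurable (fun p : X × X => dist p.1 p.2) l := by
  have key : ∀ n : ℕ, ∃ K : Set X, IsCompact K ∧ l (K ×ˢ K)ᶜ ≤ ((n : ℝ≥0∞) + 1)⁻¹ := by
    intro n
    obtain ⟨K, hK, hK'⟩ := hl ((n : ℝ≥0∞) + 1)⁻¹ (by simp)
    refine ⟨Prod.fst '' K ∪ Prod.snd '' K,
      (hK.image continuous_fst).union (hK.image continuous_snd), le_trans (measure_mono ?_) hK'⟩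
    apply compl_subset_compl.2
    intro p hp
    exact ⟨Or.inl ⟨p, hp, rfl⟩, Or.inr ⟨p, hp, rfl⟩⟩
  choose K hK hKl using key
  have hm : ∀ n, MeasurableSet (K n ×ˢ K n) := fun n =>
    (hK n).measurableSet.prod (hK n).measurableSet
  have hnull : l (⋃ n, K n ×ˢ K n)ᶜ = 0 := by
    refine le_antisymm (ENNReal.le_of_forall_pos_le_add ?_) zero_le
    intro ε hε _
    obtain ⟨n, hn⟩ := ENNReal.exists_inv_nat_lt (ENNReal.coe_pos.2 hε).ne'
    calc _ ≤ l (K n ×ˢ K n)ᶜ := measure_mono (compl_subset_compl.2 (subset_iUnion (fun n => K n ×ˢ K n) n))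
      _ ≤ _ := hKl n
      _ ≤ (n : ℝ≥0∞)⁻¹ := by gcongr; simp
      _ ≤ _ := by simpa using hn.le
  have hr : l.restrict (⋃ n, K n ×ˢ K n) = l := by
    rw [Measure.restrict_eq_self_of_ae_mem]
    exact hnull
  rw [← hr, aestronglyMeasurable_iUnion_iff]
  intro n
  have : SecondCountableTopology (K n) := by
    have := isCompact_iff_compactSpace.1 (hK n)
    infer_instance
  let φ : K n × K n → X × X := Prod.map Subtype.val Subtype.val
  have hφ : MeasurableEmbedding φ :=
    (MeasurableEmbedding.subtype_coe (hK n).measurableSet).prodMap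
      (MeasurableEmbedding.subtype_coe (hK n).measurableSet)
  have hrange : range φ = K n ×ˢ K n := by
    simp [φ, range_prodMap]
  rw [← hrange, ← hφ.map_comap, hφ.aestronglyMeasurable_map_iff]
  apply StronglyMeasurable.aestronglyMeasurable
  apply Measurable.stronglyMeasurable
  apply Continuous.measurable
  fun_prop

lemma integral_dist_eq {l : Measure (X × X)} [IsProbabilityMeasure l] (hl : IsTightM l) :
    ∫ p, dist p.1 p.2 ∂l = (∫⁻ p, edist p.1 p.2 ∂l).toReal := by
  rw [integral_eq_lintegral_of_nonneg_ae (Eventually.of_forall fun _ => dist_nonneg)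
    (aemeas_dist hl)]
  simp [edist_dist]

lemma complete_coupling {μ η : Measure X} [IsProbabilityMeasure μ] [IsProbabilityMeasure η]
    {ρ : Measure (X × X)} (h1 : ρ.map Prod.fst ≤ μ) (h2 : ρ.map Prod.snd ≤ η)
    {D : ℝ≥0∞} (hD : ∀ x y : X, edist x y ≤ D) :
    ∃ l, IsCoupling l μ η ∧
      ∫⁻ p, edist p.1 p.2 ∂l ≤ ∫⁻ p, edist p.1 p.2 ∂ρ + D * (1 - ρ univ) := by
  have e1 : ρ.map Prod.fst univ = ρ univ := by
    rw [Measure.map_apply measurable_fst MeasurableSet.univ]; simp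
  have e2 : ρ.map Prod.snd univ = ρ univ := by
    rw [Measure.map_apply measurable_snd MeasurableSet.univ]; simp
  have f1 : IsFiniteMeasure (ρ.map Prod.fst) := isFiniteMeasure_of_le _ h1
  have f2 : IsFiniteMeasure (ρ.map Prod.snd) := isFiniteMeasure_of_le _ h2
  set a := μ - ρ.map Prod.fst with ha
  set b := η - ρ.map Prod.snd with hb
  set m := 1 - ρ univ with hm
  have am : a univ = m := by
    rw [ha, Measure.sub_apply MeasurableSet.univ h1, e1]; simp [hm]
  have bm : b univ = m := by
    rw [hb, Measure.sub_apply MeasurableSet.univ h2, e2]; simp [hm]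
  have ha' : a + ρ.map Prod.fst = μ := Measure.sub_add_cancel_of_le h1
  have hb' : b + ρ.map Prod.snd = η := Measure.sub_add_cancel_of_le h2
  have mtop : m ≠ ∞ := (lt_of_le_of_lt tsub_le_self ENNReal.one_lt_top).ne
  have hfa : IsFiniteMeasure a := ⟨by rw [am]; exact mtop.lt_top⟩
  have hfb : IsFiniteMeasure b := ⟨by rw [bm]; exact mtop.lt_top⟩
  have sm : ∀ c : Measure X, c univ = m → (m⁻¹ * m) • c = c := by
    intro c hc
    rcases eq_or_ne m 0 with h0 | h0
    · rw [h0, Measure.measure_univ_eq_zero] at hc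
      simp [hc]
    · rw [ENNReal.inv_mul_cancel h0 mtop, one_smul]
  refine ⟨ρ + m⁻¹ • a.prod b, ⟨?_, ?_⟩, ?_⟩
  · rw [Measure.map_add _ _ measurable_fst, Measure.map_smul, Measure.map_fst_prod, bm, smul_smul,
      sm a am, add_comm, ha']
  · rw [Measure.map_add _ _ measurable_snd, Measure.map_smul, Measure.map_snd_prod, am, smul_smul,
      sm b bm, add_comm, hb']
  · rw [lintegral_add_measure, lintegral_smul_measure]
    gcongr
    calc m⁻¹ • ∫⁻ p, edist p.1 p.2 ∂(a.prod b) ≤ m⁻¹ • ∫⁻ p, D ∂(a.prod b) := by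
          simp only [smul_eq_mul]
          gcongr
          exact hD _ _
      _ = D * m * (m⁻¹ * m) := by
          rw [lintegral_const, ← univ_prod_univ, Measure.prod_prod, am, bm, smul_eq_mul]; ring
      _ ≤ D * m * 1 := by gcongr; exact ENNReal.inv_mul_le_one _
      _ = D * m := mul_one _


lemma sum_inter_le {Y ι : Type*} [MeasurableSpace Y] [Fintype ι] (ν : Measure Y) {S : ι → Set Y}
    (hS : ∀ i, MeasurableSet (S i)) (hd : Pairwise (Function.onFun Disjoint S)) (s : Set Y) :
    ∑ i, ν (s ∩ S i) ≤ ν s := by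
  have h := Measure.restrict_iUnion (μ := ν.restrict s) hd hS
  calc ∑ i, ν (s ∩ S i) = ∑ i, ν.restrict s (S i) := by
        simp [Measure.restrict_apply (hS _), inter_comm]
    _ = ν.restrict s (⋃ i, S i) := by rw [measure_iUnion hd hS, tsum_fintype]
    _ ≤ ν.restrict s univ := measure_mono (subset_univ _)
    _ = ν s := by simp

lemma glue {ι : Type*} [Fintype ι] {μ η₀ η : Measure X} [IsProbabilityMeasure μ]
    [IsProbabilityMeasure η₀] [IsProbabilityMeasure η] {l : Measure (X × X)}
    (hl : IsCoupling l μ η₀) {A : ι → Set X} (hA : ∀ i, MeasurableSet (A i))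
    (hd : Pairwise (Function.onFun Disjoint A)) {t : ℝ≥0∞} (ht : t ≤ 1)
    (htA : ∀ i, t * η₀ (A i) ≤ η (A i)) {r : ℝ≥0∞}
    (hr : ∀ i, ∀ y ∈ A i, ∀ z ∈ A i, edist y z ≤ r)
    {D : ℝ≥0∞} (hD : ∀ x y : X, edist x y ≤ D) :
    ∃ l', IsCoupling l' μ η ∧
      ∫⁻ p, edist p.1 p.2 ∂l' ≤
        ∫⁻ p, edist p.1 p.2 ∂l + r + D * (1 - t * η₀ (⋃ i, A i)) := by
  have hlp := coupling_prob hl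
  set S : ι → Set (X × X) := fun i => Prod.snd ⁻¹' A i with hSdef
  have hS : ∀ i, MeasurableSet (S i) := fun i => measurable_snd (hA i)
  have hSd : Pairwise (Function.onFun Disjoint S) := fun i j hij => (hd hij).preimage _
  have hlS : ∀ i, l (S i) = η₀ (A i) := fun i => by
    rw [← hl.2, Measure.map_apply measurable_snd (hA i)]
  set c : ι → ℝ≥0∞ := fun i => t * (η (A i))⁻¹ with hc
  set ρ : Measure (X × X) := ∑ i, c i • ((l.restrict (S i)).map Prod.fst).prod (η.restrict (A i))
    with hρ
  have hprod : ∀ s u : Set X, MeasurableSet s → MeasurableSet u →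
      ρ (s ×ˢ u) = ∑ i, c i * (l (Prod.fst ⁻¹' s ∩ S i) * η (u ∩ A i)) := by
    intro s u hs hu
    simp [hρ, Measure.finsetSum_apply, Measure.prod_prod, Measure.map_apply measurable_fst hs,
      Measure.restrict_apply (measurable_fst hs), Measure.restrict_apply hu]
  have hc1 : ∀ i, c i * η (A i) ≤ 1 := fun i => by
    calc t * (η (A i))⁻¹ * η (A i) = t * ((η (A i))⁻¹ * η (A i)) := mul_assoc _ _ _
      _ ≤ 1 * 1 := by gcongr; exact ENNReal.inv_mul_le_one _
      _ = 1 := one_mul 1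
  have hc2 : ∀ i, c i * η₀ (A i) ≤ 1 := fun i => by
    calc t * (η (A i))⁻¹ * η₀ (A i) = (η (A i))⁻¹ * (t * η₀ (A i)) := by ring
      _ ≤ (η (A i))⁻¹ * η (A i) := by gcongr; exact htA i
      _ ≤ 1 := ENNReal.inv_mul_le_one _
  have h1 : ρ.map Prod.fst ≤ μ := by
    refine Measure.le_iff.2 fun s hs => ?_
    rw [Measure.map_apply measurable_fst hs, ← prod_univ, hprod _ _ hs MeasurableSet.univ]
    calc _ ≤ ∑ i, l (Prod.fst ⁻¹' s ∩ S i) := by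
          gcongr with i
          rw [univ_inter]
          calc _ = c i * η (A i) * l (Prod.fst ⁻¹' s ∩ S i) := by ring
            _ ≤ 1 * _ := by gcongr; exact hc1 i
            _ = _ := one_mul _
      _ ≤ l (Prod.fst ⁻¹' s) := sum_inter_le l hS hSd _
      _ = μ s := by rw [← hl.1, Measure.map_apply measurable_fst hs]
  have h2 : ρ.map Prod.snd ≤ η := by
    refine Measure.le_iff.2 fun s hs => ?_
    rw [Measure.map_apply measurable_snd hs, ← univ_prod, hprod _ _ MeasurableSet.univ hs]
    calc _ ≤ ∑ i, η (s ∩ A i) := by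
          gcongr with i
          rw [preimage_univ, univ_inter, hlS]
          calc _ = c i * η₀ (A i) * η (s ∩ A i) := by ring
            _ ≤ 1 * _ := by gcongr; exact hc2 i
            _ = _ := one_mul _
      _ ≤ η s := sum_inter_le η hA hd _
  have hu : ρ univ = t * η₀ (⋃ i, A i) := by
    rw [← univ_prod_univ, hprod _ _ MeasurableSet.univ MeasurableSet.univ, measure_iUnion hd hA,
      tsum_fintype, Finset.mul_sum]
    refine Finset.sum_congr rfl fun i _ => ?_
    rw [preimage_univ, univ_inter, univ_inter, hlS]
    rcases eq_or_ne (η (A i)) 0 with h0 | h0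
    · have := htA i
      rw [h0] at this ⊢
      rw [nonpos_iff_eq_zero.1 this]; simp
    · calc t * (η (A i))⁻¹ * (η₀ (A i) * η (A i))
          = t * η₀ (A i) * ((η (A i))⁻¹ * η (A i)) := by ring
        _ = _ := by rw [ENNReal.inv_mul_cancel h0 (measure_ne_top _ _), mul_one]
  obtain ⟨l', hl', hcost⟩ := complete_coupling h1 h2 hD
  refine ⟨l', hl', hcost.trans ?_⟩
  rw [hu]
  gcongr
  have hterm : ∀ i, ∫⁻ p, edist p.1 p.2
      ∂(((l.restrict (S i)).map Prod.fst).prod (η.restrict (A i))) ≤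
      (∫⁻ p in S i, (edist p.1 p.2 + r) ∂l) * η (A i) := by
    intro i
    calc _ ≤ ∫⁻ x, ∫⁻ z in A i, edist x z ∂η ∂((l.restrict (S i)).map Prod.fst) :=
          lintegral_prod_le _
      _ ≤ ∫⁻ p in S i, ∫⁻ z in A i, edist p.1 z ∂η ∂l := lintegral_map_le _ _
      _ ≤ ∫⁻ p in S i, (edist p.1 p.2 + r) * η (A i) ∂l := by
          refine setLIntegral_mono' (hS i) fun p hp => ?_
          calc _ ≤ ∫⁻ z in A i, (edist p.1 p.2 + r) ∂η := by
                refine setLIntegral_mono' (hA i) fun z hz => ?_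
                exact (edist_triangle _ p.2 _).trans (by gcongr; exact hr i _ hp _ hz)
            _ = _ := by rw [setLIntegral_const]
      _ = _ := lintegral_mul_const' _ _ (measure_ne_top _ _)
  calc ∫⁻ p, edist p.1 p.2 ∂ρ
      = ∑ i, c i * ∫⁻ p, edist p.1 p.2
          ∂(((l.restrict (S i)).map Prod.fst).prod (η.restrict (A i))) := by
        simp [hρ, lintegral_finsetSum_measure]
    _ ≤ ∑ i, ∫⁻ p in S i, (edist p.1 p.2 + r) ∂l := by
        gcongr with i
        calc _ ≤ c i * ((∫⁻ p in S i, (edist p.1 p.2 + r) ∂l) * η (A i)) := by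
              gcongr; exact hterm i
          _ = c i * η (A i) * ∫⁻ p in S i, (edist p.1 p.2 + r) ∂l := by ring
          _ ≤ 1 * _ := by gcongr; exact hc1 i
          _ = _ := one_mul _
    _ = ∫⁻ p in ⋃ i, S i, (edist p.1 p.2 + r) ∂l := by
        rw [lintegral_iUnion hS hSd, tsum_fintype]
    _ ≤ ∫⁻ p, (edist p.1 p.2 + r) ∂l := setLIntegral_le_lintegral _ _
    _ = ∫⁻ p, edist p.1 p.2 ∂l + r := by
        rw [lintegral_add_right _ measurable_const]; simp

lemma exists_partition {ν : Measure X} [IsFiniteMeasure ν] {K : Set X} (hK : IsCompact K)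
    {r : ℝ} (hr : 0 < r) : ∃ (n : ℕ) (A : Fin n → Set X), (∀ i, MeasurableSet (A i)) ∧
      (∀ i, ν (frontier (A i)) = 0) ∧ Pairwise (Function.onFun Disjoint A) ∧
      (∀ i, ∀ y ∈ A i, ∀ z ∈ A i, edist y z ≤ ENNReal.ofReal (2 * r)) ∧ K ⊆ ⋃ i, A i := by
  have h : ∀ x : X, ∃ s ∈ Ioo 0 r, ν (frontier (Metric.ball x s)) = 0 := fun x => by
    simpa [Metric.thickening_singleton] using exists_null_frontier_thickening ν {x} hr
  choose s hs hs' using h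
  obtain ⟨T, hT⟩ := hK.elim_finite_subcover (fun x => Metric.ball x (s x))
    (fun x => Metric.isOpen_ball)
    (fun x _ => mem_iUnion.2 ⟨x, Metric.mem_ball_self (hs x).1⟩)
  let e := T.equivFin
  let B : Fin T.card → Set X := fun i => Metric.ball (e.symm i : X) (s (e.symm i))
  refine ⟨T.card, disjointed B, ?_, ?_, disjoint_disjointed B, ?_, ?_⟩
  · intro i
    exact disjointedRec (p := fun t => MeasurableSet t)
      (fun t j ht => ht.diff Metric.isOpen_ball.measurableSet) Metric.isOpen_ball.measurableSet
  · intro i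
    refine disjointedRec (p := fun t => ν (frontier t) = 0) (fun t j ht => ?_) (hs' _)
    rw [sdiff_eq]
    refine measure_mono_null ((frontier_inter_subset _ _).trans
      (union_subset_union inter_subset_left inter_subset_right)) (measure_union_null ht ?_)
    rw [frontier_compl]
    exact hs' _
  · intro i y hy z hz
    have hy' := Metric.mem_ball.1 (disjointed_subset B i hy)
    have hz' := Metric.mem_ball'.1 (disjointed_subset B i hz)
    rw [edist_dist]
    apply ENNReal.ofReal_le_ofReal
    have := dist_triangle y (e.symm i : X) z
    have := (hs (e.symm i : X)).2
    linarith
  · rw [iUnion_disjointed]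
    intro x hx
    obtain ⟨y, hy, hxy⟩ := mem_iUnion₂.1 (hT hx)
    refine mem_iUnion.2 ⟨e ⟨y, hy⟩, ?_⟩
    simpa [B] using hxy

lemma kant_bddBelow (μ η : Measure X) :
    BddBelow {r | ∃ l : Measure (X × X), IsProbabilityMeasure l ∧ IsTightM l ∧
    IsCoupling l μ η ∧ r = ∫ p, dist p.1 p.2 ∂l} := by
  refine ⟨0, ?_⟩
  rintro r ⟨l, _, _, _, rfl⟩
  exact integral_nonneg fun _ => dist_nonneg

lemma kant_nonneg (μ η : Measure X) : 0 ≤ kant μ η := by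
  apply Real.sInf_nonneg
  rintro r ⟨l, _, _, _, rfl⟩
  exact integral_nonneg fun _ => dist_nonneg

lemma kant_le {μ η : Measure X} [IsProbabilityMeasure μ] (hμ : IsTightM μ) (hη : IsTightM η)
    {l : Measure (X × X)} (hl : IsCoupling l μ η) :
    kant μ η ≤ (∫⁻ p, edist p.1 p.2 ∂l).toReal := by
  have := coupling_prob hl
  have ht := coupling_tight hl hμ hη
  exact csInf_le (kant_bddBelow μ η) ⟨l, this, ht, hl, (integral_dist_eq ht).symm⟩

lemma exists_of_kant_lt {μ η : Measure X} [IsProbabilityMeasure μ] [IsProbabilityMeasure η]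
    (hμ : IsTightM μ) (hη : IsTightM η) {ε : ℝ} (h : kant μ η < ε) :
    ∃ l : Measure (X × X), IsProbabilityMeasure l ∧ IsTightM l ∧ IsCoupling l μ η ∧
      ∫ p, dist p.1 p.2 ∂l < ε := by
  have hprod : IsCoupling (μ.prod η) μ η := by
    constructor
    · rw [Measure.map_fst_prod]; simp
    · rw [Measure.map_snd_prod]; simp
  have hne : {r | ∃ l : Measure (X × X), IsProbabilityMeasure l ∧ IsTightM l ∧
      IsCoupling l μ η ∧ r = ∫ p, dist p.1 p.2 ∂l}.Nonempty :=
    ⟨_, μ.prod η, inferInstance, coupling_tight hprod hμ hη, hprod, rfl⟩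
  obtain ⟨r, ⟨l, h1, h2, h3, rfl⟩, hr⟩ := exists_lt_of_csInf_lt hne h
  exact ⟨l, h1, h2, h3, hr⟩

lemma kant_self {μ : Measure X} [IsProbabilityMeasure μ] (hμ : IsTightM μ) : kant μ μ = 0 := by
  refine le_antisymm ?_ (kant_nonneg _ _)
  have hm : Measurable (fun x : X => (x, x)) := measurable_id.prodMk measurable_id
  have hl : IsCoupling (μ.map fun x => (x, x)) μ μ := by
    constructor
    · rw [Measure.map_map measurable_fst hm]; exact Measure.map_id
    · rw [Measure.map_map measurable_snd hm]; exact Measure.map_id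
  refine (kant_le hμ hμ hl).trans ?_
  have : ∫⁻ p, edist p.1 p.2 ∂(μ.map fun x => (x, x)) = 0 :=
    le_antisymm ((lintegral_map_le _ _).trans (by simp)) zero_le
  rw [this]; simp

lemma lipschitz_kant (hbdd : Bornology.IsBounded (univ : Set X))
    {μ η : Measure X} [IsProbabilityMeasure μ] [IsProbabilityMeasure η]
    (hμ : IsTightM μ) (hη : IsTightM η) {f : X → ℝ} {L : NNReal} (hf : LipschitzWith L f) :
    |∫ x, f x ∂η - ∫ x, f x ∂μ| ≤ L * kant μ η := by
  obtain ⟨D, hD⟩ := Metric.isBounded_iff.1 hbdd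
  have hfm : Measurable f := hf.continuous.measurable
  obtain ⟨C, hC⟩ : ∃ C, ∀ x, ‖f x‖ ≤ C := by
    rcases isEmpty_or_nonempty X with h | ⟨⟨x₀⟩⟩
    · exact ⟨0, fun x => h.elim x⟩
    · refine ⟨‖f x₀‖ + L * D, fun x => ?_⟩
      have h1 := hf.dist_le_mul x x₀
      have h2 : (L : ℝ) * dist x x₀ ≤ L * D := by
        gcongr; exact hD (mem_univ _) (mem_univ _)
      have h3 := norm_sub_norm_le (f x) (f x₀)
      rw [dist_eq_norm] at h1
      linarith
  refine le_of_forall_pos_le_add fun ε hε => ?_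
  have hL : (0 : ℝ) < L + 1 := by positivity
  obtain ⟨l, h1, h2, h3, h4⟩ := exists_of_kant_lt hμ hη
    (lt_add_of_pos_right (kant μ η) (div_pos hε hL))
  have e1 : ∫ x, f x ∂μ = ∫ p, f p.1 ∂l := by
    rw [← h3.1, integral_map measurable_fst.aemeasurable hfm.aestronglyMeasurable]
  have e2 : ∫ x, f x ∂η = ∫ p, f p.2 ∂l := by
    rw [← h3.2, integral_map measurable_snd.aemeasurable hfm.aestronglyMeasurable]
  have i1 : Integrable (fun p : X × X => f p.1) l :=
    Integrable.of_bound (hfm.comp measurable_fst).aestronglyMeasurable C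
      (Eventually.of_forall fun _ => hC _)
  have i2 : Integrable (fun p : X × X => f p.2) l :=
    Integrable.of_bound (hfm.comp measurable_snd).aestronglyMeasurable C
      (Eventually.of_forall fun _ => hC _)
  have i3 : Integrable (fun p : X × X => dist p.1 p.2) l :=
    Integrable.of_bound (aemeas_dist h2) D (Eventually.of_forall fun p => by
      rw [Real.norm_of_nonneg dist_nonneg]; exact hD (mem_univ _) (mem_univ _))
  rw [e1, e2, ← integral_sub i2 i1]
  calc |∫ p, (f p.2 - f p.1) ∂l| ≤ ∫ p, |f p.2 - f p.1| ∂l := abs_integral_le_integral_abs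
    _ ≤ ∫ p, L * dist p.1 p.2 ∂l := by
        refine integral_mono (i2.sub i1).abs (i3.const_mul _) fun p => ?_
        have := hf.dist_le_mul p.2 p.1
        rwa [Real.dist_eq, dist_comm p.2] at this
    _ = L * ∫ p, dist p.1 p.2 ∂l := integral_const_mul _ _
    _ ≤ L * (kant μ η + ε / (L + 1)) := by gcongr
    _ = L * kant μ η + ε * (L / (L + 1)) := by ring
    _ ≤ L * kant μ η + ε * 1 := by
        gcongr
        rw [div_le_one hL]; linarith
    _ = _ := by rw [mul_one]

lemma eventually_kant_lt (hbdd : Bornology.IsBounded (univ : Set X))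
    (μ₀ η₀ : {μ : ProbabilityMeasure X // IsTightM (μ : Measure X)}) {ε : ℝ}
    (h : kant (μ₀.1 : Measure X) (η₀.1 : Measure X) < ε) :
    ∀ᶠ η in 𝓝 η₀, kant (μ₀.1 : Measure X) (η.1 : Measure X) < ε := by
  obtain ⟨D', hD'⟩ := Metric.isBounded_iff.1 hbdd
  set D := max D' 1 with hDdef
  have hD1 : 1 ≤ D := le_max_right _ _
  have hD : ∀ x y : X, edist x y ≤ ENNReal.ofReal D := fun x y => by
    rw [edist_dist]
    exact ENNReal.ofReal_le_ofReal ((hD' (mem_univ _) (mem_univ _)).trans (le_max_left _ _))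
  obtain ⟨l, hl1, hl2, hl3, hl4⟩ := exists_of_kant_lt μ₀.2 η₀.2 h
  set c := ∫ p, dist p.1 p.2 ∂l with hc
  set g := ε - c with hg
  have hg0 : 0 < g := sub_pos.2 hl4
  have hc0 : 0 ≤ c := integral_nonneg fun _ => dist_nonneg
  have hcE : ∫⁻ p, edist p.1 p.2 ∂l = ENNReal.ofReal c := by
    rw [hc, integral_dist_eq hl2, ENNReal.ofReal_toReal]
    refine ne_top_of_le_ne_top (ENNReal.ofReal_ne_top (r := D)) ?_
    calc _ ≤ ∫⁻ _, ENNReal.ofReal D ∂l := lintegral_mono fun p => hD _ _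
      _ = _ := by simp
  set δ := min (1 / 2) (g / (8 * D)) with hδ
  have hδ0 : 0 < δ := lt_min (by norm_num) (by positivity)
  have hδ1 : δ ≤ 1 / 2 := min_le_left _ _
  have hδ2 : D * (2 * δ) ≤ g / 4 := by
    have : δ ≤ g / (8 * D) := min_le_right _ _
    rw [le_div_iff₀ (by positivity)] at this
    linarith
  obtain ⟨K, hK, hKδ⟩ := η₀.2 (ENNReal.ofReal δ) (ENNReal.ofReal_pos.2 hδ0)
  obtain ⟨n, A, hA, hAf, hAd, hAr, hAK⟩ :=
    exists_partition (ν := (η₀.1 : Measure X)) hK (r := g / 8) (by positivity)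
  have hAm : ENNReal.ofReal (1 - δ) ≤ (η₀.1 : Measure X) (⋃ i, A i) := by
    refine le_trans ?_ (measure_mono hAK)
    rw [ENNReal.ofReal_sub _ hδ0.le, ENNReal.ofReal_one, tsub_le_iff_right]
    calc (1 : ℝ≥0∞) = (η₀.1 : Measure X) univ := by simp
      _ = (η₀.1 : Measure X) K + (η₀.1 : Measure X) Kᶜ :=
          (measure_add_measure_compl hK.measurableSet).symm
      _ ≤ _ := by gcongr
  set t := ENNReal.ofReal (1 - δ) with ht
  have ht1 : t < 1 := by
    rw [ht, ENNReal.ofReal_lt_one]; linarith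
  have hev : ∀ᶠ η : {μ : ProbabilityMeasure X // IsTightM (μ : Measure X)} in 𝓝 η₀,
      ∀ i, t * (η₀.1 : Measure X) (A i) ≤ (η.1 : Measure X) (A i) := by
    refine eventually_all.2 fun i => ?_
    rcases eq_or_ne ((η₀.1 : Measure X) (A i)) 0 with h0 | h0
    · simp [h0]
    · have hlim := ProbabilityMeasure.tendsto_measure_of_null_frontier_of_tendsto'
        (continuous_subtype_val.tendsto η₀) (hAf i)
      have hlt : t * (η₀.1 : Measure X) (A i) < (η₀.1 : Measure X) (A i) := by
        calc _ < 1 * (η₀.1 : Measure X) (A i) :=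
              ENNReal.mul_lt_mul_left h0 (measure_ne_top _ _) ht1
          _ = _ := one_mul _
      exact (hlim.eventually_const_lt hlt).mono fun _ h => h.le
  filter_upwards [hev] with η hη
  obtain ⟨l', hl', hcost⟩ := glue hl3 hA hAd ht1.le hη hAr hD
  refine (kant_le μ₀.2 η.2 hl').trans_lt ?_
  have hrest : 1 - t * (η₀.1 : Measure X) (⋃ i, A i) ≤ ENNReal.ofReal (2 * δ) := by
    calc _ ≤ 1 - t * t := by gcongr
      _ = ENNReal.ofReal (1 - (1 - δ) * (1 - δ)) := by
          rw [ht, ← ENNReal.ofReal_mul (by linarith), ENNReal.ofReal_sub _ (by nlinarith),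
            ENNReal.ofReal_one]
      _ ≤ _ := ENNReal.ofReal_le_ofReal (by nlinarith)
  have htot : ∫⁻ p, edist p.1 p.2 ∂l' ≤ ENNReal.ofReal (c + g / 4 + g / 4) := by
    calc _ ≤ _ := hcost
      _ ≤ ENNReal.ofReal c + ENNReal.ofReal (2 * (g / 8)) +
          ENNReal.ofReal D * ENNReal.ofReal (2 * δ) := by
            rw [hcE]; gcongr
      _ = ENNReal.ofReal (c + 2 * (g / 8) + D * (2 * δ)) := by
          rw [← ENNReal.ofReal_mul (by positivity), ← ENNReal.ofReal_add hc0 (by positivity),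
            ← ENNReal.ofReal_add (by positivity) (by positivity)]
      _ ≤ _ := ENNReal.ofReal_le_ofReal (by linarith)
  have := ENNReal.toReal_le_of_le_ofReal (by positivity) htot
  linarith

end helpers

/-- If `d` is a bounded compatible metric on `X`, then the Kantorovich metric on the space
of Radon (tight) probability measures induces the weak topology of that space: the topology
generated by the Kantorovich balls coincides with the subspace topology inherited from the
weak topology on probability measures. -/
theorem stmt13 {X : Type*} [MetricSpace X] [MeasurableSpace X] [BorelSpace X]
    (hbdd : Bornology.IsBounded (Set.univ : Set X)) :
    TopologicalSpace.generateFrom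
      {S : Set {μ : ProbabilityMeasure X // IsTightM (μ : Measure X)} |
        ∃ μ₀ : {μ : ProbabilityMeasure X // IsTightM (μ : Measure X)}, ∃ ε : ℝ, 0 < ε ∧
          S = {η | kant (μ₀.1 : Measure X) (η.1 : Measure X) < ε}} =
    (inferInstance :
      TopologicalSpace {μ : ProbabilityMeasure X // IsTightM (μ : Measure X)}) := by
  apply le_antisymm
  · refine (@le_iff_nhds _ _ _).2 fun μ₀ => ?_
    set F : Filter {μ : ProbabilityMeasure X // IsTightM (μ : Measure X)} :=
      Filter.comap (fun η => kant (μ₀.1 : Measure X) (η.1 : Measure X)) (nhds 0) with hF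
    have hFc : F.IsCountablyGenerated := by rw [hF]; infer_instance
    have h1 : F ≤ nhds μ₀ := by
      rw [nhds_subtype_eq_comap, ← Filter.tendsto_iff_comap,
        tendsto_iff_forall_lipschitz_integral_tendsto]
      rintro f - ⟨L, hf⟩
      rw [tendsto_iff_dist_tendsto_zero]
      have hk : Filter.Tendsto (fun η : {μ : ProbabilityMeasure X // IsTightM (μ : Measure X)} =>
          (L : ℝ) * kant (μ₀.1 : Measure X) (η.1 : Measure X)) F (nhds 0) := by
        simpa using (Filter.tendsto_comap (f := fun η :
          {μ : ProbabilityMeasure X // IsTightM (μ : Measure X)} =>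
          kant (μ₀.1 : Measure X) (η.1 : Measure X)) (x := nhds 0)).const_mul (L : ℝ)
      refine squeeze_zero (fun _ => dist_nonneg) (fun η => ?_) hk
      rw [Real.dist_eq]
      exact lipschitz_kant hbdd μ₀.2 η.2 hf
    refine le_trans ?_ h1
    rw [hF]
    intro s hs
    obtain ⟨u, hu, hus⟩ := Filter.mem_comap.1 hs
    obtain ⟨ε, hε, hεu⟩ := Metric.mem_nhds_iff.1 hu
    refine Filter.mem_of_superset (@IsOpen.mem_nhds _ (_) μ₀
      {η : {μ : ProbabilityMeasure X // IsTightM (μ : Measure X)} |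
        kant (μ₀.1 : Measure X) (η.1 : Measure X) < ε}
      (TopologicalSpace.isOpen_generateFrom_of_mem ⟨μ₀, ε, hε, rfl⟩) ?_) ?_
    · show kant _ _ < ε
      rw [kant_self μ₀.2]; exact hε
    · intro η hη
      refine hus (hεu ?_)
      rw [Metric.mem_ball, Real.dist_eq, sub_zero, abs_of_nonneg (kant_nonneg _ _)]
      exact hη
  · refine le_generateFrom ?_
    rintro S ⟨μ₀, ε, hε, rfl⟩
    exact isOpen_iff_mem_nhds.2 fun η₀ h => eventually_kant_lt hbdd μ₀ η₀ h
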